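/- arXiv:1411.0659 — 2 statements merged into one kernel-verified Lean document; each statement's English description precedes it below -/
import Mathlib

section
/- Let n, m be natural numbers and let H be a pairwise independent random hash function from {0,1}^n to {0,1}^m on a probability space (Ω, P). Let y be a real number with 0 < y < 1, set G = 4/y² and a = (1 − y)·G. Let S be a finite subset of {0,1}^n such that |S| ≥ G·2^m. Let Z(ω) be the number of elements w ∈ S with H(ω)(w) = 0^m. Then P[Z ≥ a] ≥ 3/4. -/
open MeasureTheory
open scoped ENNReal ProbabilityTheory

namespace ProbabilityTheory

variable {Ω : Type*} [MeasurableSpace Ω] {μ : Measure Ω}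

/-- The indicators of two independent events are independent random variables. -/
theorem IndepSet.indepFun_indicator_one {A B : Set Ω} (h : IndepSet A B μ) :
    IndepFun (A.indicator (1 : Ω → ℝ)) (B.indicator (1 : Ω → ℝ)) μ := by
  have comap_le (C : Set Ω) : MeasurableSpace.comap (C.indicator (1 : Ω → ℝ)) inferInstance ≤
      MeasurableSpace.generateFrom {C} := by
    let _ : MeasurableSpace Ω := MeasurableSpace.generateFrom {C}
    exact measurable_iff_comap_le.mp
      (measurable_one.indicator (MeasurableSpace.measurableSet_generateFrom rfl))
  rw [IndepFun_iff_Indep]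
  exact indep_of_indep_of_le_left (indep_of_indep_of_le_right h (comap_le B)) (comap_le A)

/-- The variance of the indicator of an event is at most the probability of the event. -/
theorem variance_indicator_one_le [IsProbabilityMeasure μ] {A : Set Ω} (hA : MeasurableSet A) :
    variance (A.indicator (1 : Ω → ℝ)) μ ≤ μ.real A := by
  refine (variance_le_expectation_sq
    (measurable_one.indicator hA).aestronglyMeasurable).trans_eq ?_
  rw [← integral_indicator_one hA]
  congr 1 with ω
  by_cases h : ω ∈ A <;> simp [h]

/-- Chebyshev's inequality for the number of occurring events among pairwise independent ones. -/
theorem measure_sum_indicator_le_le [IsProbabilityMeasure μ] {ι : Type*} {A : ι → Set Ω}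
    {s : Finset ι} (hA : ∀ i ∈ s, MeasurableSet (A i))
    (hind : (s : Set ι).Pairwise fun i j => IndepSet (A i) (A j) μ)
    {y : ℝ} (hy : 0 < y) (hpos : 0 < ∑ i ∈ s, μ.real (A i)) :
    μ {ω | ∑ i ∈ s, (A i).indicator (1 : Ω → ℝ) ω ≤ (1 - y) * ∑ i ∈ s, μ.real (A i)} ≤
      ENNReal.ofReal (1 / (y ^ 2 * ∑ i ∈ s, μ.real (A i))) := by
  have hLp : ∀ i ∈ s, MemLp ((A i).indicator (1 : Ω → ℝ)) 2 μ := fun i hi =>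
    memLp_indicator_const 2 (hA i hi) 1 (Or.inr (measure_ne_top μ _))
  have hmean : ∫ ω, (∑ i ∈ s, (A i).indicator (1 : Ω → ℝ)) ω ∂μ = ∑ i ∈ s, μ.real (A i) := by
    simp only [Finset.sum_apply]
    rw [integral_finsetSum s fun i hi => (hLp i hi).integrable one_le_two]
    exact Finset.sum_congr rfl fun i hi => integral_indicator_one (hA i hi)
  have hvar : variance (∑ i ∈ s, (A i).indicator (1 : Ω → ℝ)) μ ≤ ∑ i ∈ s, μ.real (A i) := by
    rw [IndepFun.variance_sum hLp fun i hi j hj hij => (hind hi hj hij).indepFun_indicator_one]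
    exact Finset.sum_le_sum fun i hi => variance_indicator_one_le (hA i hi)
  have hcheb := meas_ge_le_variance_div_sq (memLp_finsetSum' s hLp) (mul_pos hy hpos)
  rw [hmean] at hcheb
  refine (measure_mono fun ω hω => ?_).trans (hcheb.trans (ENNReal.ofReal_le_ofReal ?_))
  · simp only [Set.mem_ofPred_eq, Finset.sum_apply] at hω ⊢
    rw [abs_sub_comm]
    exact le_trans (by linarith) (le_abs_self _)
  · calc _ ≤ (∑ i ∈ s, μ.real (A i)) / (y * ∑ i ∈ s, μ.real (A i)) ^ 2 := by gcongr
      _ = _ := by field_simp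

end ProbabilityTheory

/-- If every joint value of `X` and `Y` with `X = u` has probability `2^(-2m)`, where `Y` takes
`2^m` values, then `X = u` has probability `2^(-m)`. -/
theorem measure_eq_of_joint_uniform {Ω β : Type*} [MeasurableSpace Ω] {μ : Measure Ω} {m : ℕ}
    {X : Ω → β} {Y : Ω → Fin m → Bool} (hY : Measurable Y) (u : β)
    (h : ∀ v, μ {ω | X ω = u ∧ Y ω = v} = ((2 : ℝ≥0∞) ^ (2 * m))⁻¹) :
    μ {ω | X ω = u} = ((2 : ℝ≥0∞) ^ m)⁻¹ := by
  have hsum := sum_measure_preimage_singleton (μ := μ.restrict {ω | X ω = u}) (f := Y)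
    Finset.univ fun v _ => hY (measurableSet_singleton v)
  have hterm (v : Fin m → Bool) :
      μ.restrict {ω | X ω = u} (Y ⁻¹' {v}) = ((2 : ℝ≥0∞) ^ (2 * m))⁻¹ := by
    rw [Measure.restrict_apply (hY (measurableSet_singleton v)), Set.inter_comm]
    exact h v
  simp only [hterm, Finset.sum_const, Finset.card_univ, Fintype.card_pi, Fintype.card_bool,
    Finset.prod_const, Fintype.card_fin, nsmul_eq_mul, Finset.coe_univ, Set.preimage_univ,
    Measure.restrict_apply_univ, Nat.cast_pow, Nat.cast_ofNat] at hsum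
  rw [← hsum, two_mul, pow_add, ENNReal.mul_inv (by simp) (by simp), ← mul_assoc,
    ENNReal.mul_inv_cancel (by simp) (by simp), one_mul]

/-- Estimate oracle, dense case: if `|S| ≥ G · 2^m` with `G = 4/y²` and `a = (1−y)·G`,
then the number `Z` of elements of `S` hashed to `0^m` by a pairwise independent random
hash function is at least `a` with probability at least `3/4`. -/
theorem estimate_yes {Ω : Type*} [MeasureSpace Ω] [IsProbabilityMeasure (ℙ : Measure Ω)]
    (n m : ℕ) (H : Ω → (Fin n → Bool) → (Fin m → Bool)) (hH : Measurable H)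
    (hpair : ∀ w w' : Fin n → Bool, w ≠ w' → ∀ u u' : Fin m → Bool,
      ℙ {ω | H ω w = u ∧ H ω w' = u'} = ((2 : ℝ≥0∞) ^ (2 * m))⁻¹)
    (y G a : ℝ) (hy0 : 0 < y) (hy1 : y < 1) (hG : G = 4 / y ^ 2) (ha : a = (1 - y) * G)
    (S : Finset (Fin n → Bool)) (hS : G * 2 ^ m ≤ (S.card : ℝ))
    (Z : Ω → ℕ) (hZ : ∀ ω, Z ω = (S.filter (fun w => H ω w = fun _ => false)).card) :
    3 / 4 ≤ ℙ {ω | a ≤ (Z ω : ℝ)} := by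
  have hGy : y ^ 2 * G = 4 := by rw [hG]; field_simp
  have hG4 : 4 < G := by
    have : y ^ 2 < 1 := by nlinarith
    rw [hG, lt_div_iff₀ (by positivity)]
    linarith
  have hcard : 1 < S.card := by
    have h2m : (1 : ℝ) ≤ 2 ^ m := one_le_pow₀ one_le_two
    have : (1 : ℝ) < S.card := by nlinarith
    exact_mod_cast this
  have : Nontrivial (Fin n → Bool) := by
    obtain ⟨w, -, w', -, hne⟩ := Finset.one_lt_card.mp hcard
    exact ⟨w, w', hne⟩
  have hmeas (w : Fin n → Bool) : Measurable fun ω => H ω w := (measurable_pi_apply w).comp hH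
  let A : (Fin n → Bool) → Set Ω := fun w => {ω | H ω w = fun _ => false}
  have hA (w : Fin n → Bool) : MeasurableSet (A w) := hmeas w (measurableSet_singleton _)
  have hprob (w : Fin n → Bool) : ℙ (A w) = ((2 : ℝ≥0∞) ^ m)⁻¹ := by
    obtain ⟨w', hne⟩ := exists_ne w
    exact measure_eq_of_joint_uniform (hmeas w') _ fun v => hpair w w' hne.symm _ v
  have hind : (S : Set (Fin n → Bool)).Pairwise
      fun w w' => ProbabilityTheory.IndepSet (A w) (A w') ℙ := by
    intro w _ w' _ hne
    rw [ProbabilityTheory.indepSet_iff_measure_inter_eq_mul (hA w) (hA w') ℙ, hprob, hprob,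
      ← ENNReal.mul_inv (by simp) (by simp), ← pow_add, ← two_mul]
    exact hpair w w' hne _ _
  have hmean : ∑ w ∈ S, (ℙ : Measure Ω).real (A w) = S.card / 2 ^ m := by
    simp [Measure.real, hprob, div_eq_mul_inv]
  have hG_le : G ≤ ∑ w ∈ S, (ℙ : Measure Ω).real (A w) := by
    rwa [hmean, le_div_iff₀ (by positivity)]
  have hZ_sum (ω : Ω) : (Z ω : ℝ) = ∑ w ∈ S, (A w).indicator (1 : Ω → ℝ) ω := by
    simp [hZ, A, Set.indicator_apply]
  have htail := ProbabilityTheory.measure_sum_indicator_le_le (fun w _ => hA w) hind hy0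
    (by linarith)
  simp only [← hZ_sum] at htail
  have hquarter : ℙ {ω | a ≤ (Z ω : ℝ)}ᶜ ≤ 1 / 4 := by
    refine (measure_mono fun ω hω => ?_).trans (htail.trans
      ((ENNReal.ofReal_le_ofReal (q := 1 / 4) ?_).trans_eq ?_))
    · simp only [Set.mem_compl_iff, Set.mem_ofPred_eq, not_le] at hω ⊢
      rw [ha] at hω
      exact hω.le.trans (mul_le_mul_of_nonneg_left hG_le (by linarith))
    · refine one_div_le_one_div_of_le (by norm_num) ?_
      rw [← hGy]
      gcongr
    · rw [ENNReal.ofReal_div_of_pos (by norm_num)]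
      simp
  have hone : (1 : ℝ≥0∞) ≤ ℙ {ω | a ≤ (Z ω : ℝ)} + 1 / 4 := by
    calc (1 : ℝ≥0∞) = ℙ ({ω | a ≤ (Z ω : ℝ)} ∪ {ω | a ≤ (Z ω : ℝ)}ᶜ) := by simp
      _ ≤ _ := (measure_union_le _ _).trans (by gcongr)
  refine ENNReal.le_of_add_le_add_right (a := 1 / 4) (by simp) (le_trans (le_of_eq ?_) hone)
  rw [← ENNReal.add_div]
  norm_num
  exact ENNReal.div_self (by simp) (by simp)
end

section
/- Let a ≥ 1 and ε > 0 be real numbers, set g = (√(a+1) − 1)² and G = (√(a+1) + 1)², let q ≥ 1 be a natural number with (1 + ε)^(2q) ≥ 2·G/g, let m be a natural number, and let N be a real number with (g/2)·2^m ≤ N ≤ G·2^m. Then the value v_q := a·2^m/√2 satisfies (1 + ε)^(−q)·N ≤ v_q ≤ (1 + ε)^q·N. Moreover, v_q = √((g/2)·2^m · G·2^m). -/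
/-- If `U / L ≤ E ^ 2`, the geometric mean `v` of `L` and `U` approximates every point of `[L, U]`
within the multiplicative factor `E`. -/
theorem geom_mean_approx {L U E v N : ℝ} (hL : 0 < L) (hU : 0 ≤ U) (hE : 0 < E) (hv : 0 ≤ v)
    (hvLU : v ^ 2 = L * U) (hgap : U ≤ E ^ 2 * L) (hLN : L ≤ N) (hNU : N ≤ U) :
    E⁻¹ * N ≤ v ∧ v ≤ E * N := by
  constructor
  · rw [inv_mul_le_iff₀ hE]
    refine hNU.trans (abs_le_of_sq_le_sq' ?_ (by positivity)).2
    calc U ^ 2 = U * U := sq U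
      _ ≤ E ^ 2 * L * U := by gcongr
      _ = (E * v) ^ 2 := by rw [mul_pow, hvLU, mul_assoc]
  · refine le_trans (abs_le_of_sq_le_sq' ?_ (by positivity)).2 (mul_le_mul_of_nonneg_left hLN hE.le)
    calc v ^ 2 = L * U := hvLU
      _ ≤ L * (E ^ 2 * L) := by gcongr
      _ = (E * L) ^ 2 := by ring

/-- Correctness of the return value of the approximate model counting algorithm:
if `(g/2)·2^m ≤ N ≤ G·2^m` with `g = (√(a+1) − 1)²`, `G = (√(a+1) + 1)²`, and
`(1+ε)^(2q) ≥ 2G/g`, then `v = a·2^m/√2` satisfies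
`(1+ε)^(−q)·N ≤ v ≤ (1+ε)^q·N`, and `v` is the geometric mean of the endpoints. -/
theorem return_value_correct (a ε : ℝ) (ha : 1 ≤ a) (hε : 0 < ε)
    (g G : ℝ) (hg : g = (Real.sqrt (a + 1) - 1) ^ 2) (hG : G = (Real.sqrt (a + 1) + 1) ^ 2)
    (q : ℕ) (hq : 1 ≤ q) (hgap : 2 * G / g ≤ (1 + ε) ^ (2 * q))
    (m : ℕ) (N : ℝ) (hN1 : g / 2 * 2 ^ m ≤ N) (hN2 : N ≤ G * 2 ^ m)
    (v : ℝ) (hv : v = a * 2 ^ m / Real.sqrt 2) :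
    ((1 + ε) ^ q)⁻¹ * N ≤ v ∧ v ≤ (1 + ε) ^ q * N ∧
    v = Real.sqrt ((g / 2 * 2 ^ m) * (G * 2 ^ m)) := by
  have hs : Real.sqrt (a + 1) ^ 2 = a + 1 := Real.sq_sqrt (by linarith)
  have hs1 : 1 < Real.sqrt (a + 1) := Real.lt_sqrt_of_sq_lt (by linarith)
  have hg0 : 0 < g := hg ▸ pow_pos (sub_pos.2 hs1) 2
  have hG0 : 0 ≤ G := hG ▸ sq_nonneg _
  have hgG : g * G = a ^ 2 := by
    rw [hg, hG, ← mul_pow]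
    congr 1
    linear_combination hs
  have hv0 : 0 ≤ v := by rw [hv]; positivity
  have hv2 : v ^ 2 = (g / 2 * 2 ^ m) * (G * 2 ^ m) := by
    rw [hv, div_pow, mul_pow, Real.sq_sqrt zero_le_two, ← hgG]
    ring
  have hU : G * 2 ^ m ≤ ((1 + ε) ^ q) ^ 2 * (g / 2 * 2 ^ m) := by
    rw [div_le_iff₀ hg0, mul_comm 2 q, pow_mul] at hgap
    rw [← mul_assoc]
    gcongr
    linarith
  obtain ⟨h₁, h₂⟩ := geom_mean_approx (by positivity) (by positivity) (by positivity) hv0 hv2 hU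
    hN1 hN2
  exact ⟨h₁, h₂, by rw [← hv2, Real.sqrt_sq hv0]⟩
end
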